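/- Let A be a commutative ring, let f ∈ A be a nonzerodivisor, and let M be an A-module. Then M is faithfully flat over A if and only if the following three conditions hold: (i) multiplication by f is injective on M; (ii) the quotient M/fM is a faithfully flat module over the quotient ring A/(f); and (iii) the localization M_f is a faithfully flat module over the localization A_f. -/

import Mathlib

namespace FFStrat

open TensorProduct

variable {A : Type*} [CommRing A] {f : A}

lemma mem_span_smul_top {K : Type*} [AddCommGroup K] [Module A K] (k : K) :
    k ∈ (Ideal.span {f} • ⊤ : Submodule A K) ↔ ∃ y, f • y = k := by
  rw [Submodule.ideal_span_singleton_smul, Submodule.mem_smul_pointwise_iff_exists]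
  simp

/-- If `f` is regular on the cokernel, then `K/f → F/f` is injective. -/
lemma baseChange_injective {F N : Type*} [AddCommGroup F] [Module A F]
    [AddCommGroup N] [Module A N] (g : F →ₗ[A] N) (hN : IsSMulRegular N f) :
    Function.Injective ((LinearMap.ker g).subtype.lTensor (A ⧸ Ideal.span {f})) := by
  rw [injective_iff_map_eq_zero]
  intro z hz
  obtain ⟨w, rfl⟩ := (quotTensorEquivQuotSMul (LinearMap.ker g) (Ideal.span {f})).symm.surjective z
  obtain ⟨k, rfl⟩ := Submodule.Quotient.mk_surjective _ w
  rw [quotTensorEquivQuotSMul_symm_mk, LinearMap.lTensor_tmul] at hz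
  have h2 := congrArg (quotTensorEquivQuotSMul F (Ideal.span {f})) hz
  rw [quotTensorEquivQuotSMul_mk_one_tmul, map_zero, Submodule.Quotient.mk_eq_zero,
    mem_span_smul_top] at h2
  obtain ⟨y, hy⟩ := h2
  have hgy : g y = 0 := by
    apply hN.right_eq_zero_of_smul
    rw [← map_smul, hy]
    exact k.2
  have : (Submodule.Quotient.mk k :
      LinearMap.ker g ⧸ (Ideal.span {f} • ⊤ : Submodule A (LinearMap.ker g))) = 0 := by
    rw [Submodule.Quotient.mk_eq_zero, mem_span_smul_top]
    exact ⟨⟨y, hgy⟩, Subtype.ext hy⟩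
  rw [this, map_zero]

lemma lTensor_quot_injective {B P K F : Type*} [CommRing B] [Algebra A B]
    [AddCommGroup P] [Module A P] [Module B P] [IsScalarTower A B P] [Module.Flat B P]
    [AddCommGroup K] [Module A K] [AddCommGroup F] [Module A F] (i : K →ₗ[A] F)
    (hi : Function.Injective (i.lTensor B)) : Function.Injective (i.lTensor P) := by
  have h1 : Function.Injective ((AlgebraTensorModule.lTensor B B i).lTensor P) :=
    Module.Flat.lTensor_preserves_injective_linearMap _ hi
  have h2 := AlgebraTensorModule.lTensor_comp_cancelBaseChange (R := A) (A := B) (B := B)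
    (M := P) (f := i)
  intro x y hxy
  obtain ⟨x, rfl⟩ := (AlgebraTensorModule.cancelBaseChange A B B P K).surjective x
  obtain ⟨y, rfl⟩ := (AlgebraTensorModule.cancelBaseChange A B B P K).surjective y
  congr 1
  apply h1
  apply (AlgebraTensorModule.cancelBaseChange A B B P F).injective
  have hx := LinearMap.congr_fun h2 x
  have hy := LinearMap.congr_fun h2 y
  exact hx.symm.trans (Eq.trans hxy hy)

lemma isSMulRegular_tensor_aux {M N F : Type*} [AddCommGroup M] [Module A M]
    [AddCommGroup N] [Module A N] [AddCommGroup F] [Module A F] [Module.Flat A F]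
    (g : F →ₗ[A] N) (hg : Function.Surjective g) (hM : IsSMulRegular M f)
    [Module.Flat (A ⧸ Ideal.span {f}) (M ⧸ (Ideal.span {f} • ⊤ : Submodule A M))]
    (hN : IsSMulRegular N f) : IsSMulRegular (M ⊗[A] N) f := by
  have hex : Function.Exact (LinearMap.ker g).subtype g := LinearMap.exact_subtype_ker_map g
  have hexM : Function.Exact ((LinearMap.ker g).subtype.lTensor M) (g.lTensor M) :=
    lTensor_exact M hex hg
  have hinj := lTensor_quot_injective
    (P := M ⧸ (Ideal.span {f} • ⊤ : Submodule A M)) _ (baseChange_injective g hN)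
  have hF : IsSMulRegular (M ⊗[A] F) f := hM.rTensor _
  let q := (Ideal.span {f} • ⊤ : Submodule A M).mkQ
  have hq : Function.Exact (LinearMap.lsmul A M f) q := by
    intro x
    simp only [q, Submodule.mkQ_apply, Submodule.Quotient.mk_eq_zero, mem_span_smul_top]
    rfl
  have hqK := rTensor_exact (LinearMap.ker g) hq (Submodule.mkQ_surjective _)
  refine IsSMulRegular.of_right_eq_zero_of_smul fun x hx => ?_
  obtain ⟨y, rfl⟩ := LinearMap.lTensor_surjective M hg x
  rw [← map_smul] at hx
  obtain ⟨k, hk⟩ := (hexM _).1 hx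
  have hk0 : q.rTensor (LinearMap.ker g) k = 0 := by
    apply hinj
    rw [map_zero]
    have hc : ((LinearMap.ker g).subtype.lTensor _) (q.rTensor (LinearMap.ker g) k) =
        q.rTensor F ((LinearMap.ker g).subtype.lTensor M k) := by
      rw [← LinearMap.comp_apply, ← LinearMap.comp_apply, LinearMap.lTensor_comp_rTensor,
        LinearMap.rTensor_comp_lTensor]
    rw [hc, hk, map_smul, ← LinearMap.smul_apply, ← LinearMap.rTensor_smul]
    have : f • q = 0 := by
      ext m
      simp only [q, LinearMap.smul_apply, Submodule.mkQ_apply, ← Submodule.Quotient.mk_smul,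
        LinearMap.zero_apply, Submodule.Quotient.mk_eq_zero, mem_span_smul_top]
      exact ⟨m, rfl⟩
    rw [this, LinearMap.rTensor_zero, LinearMap.zero_apply]
  obtain ⟨k', rfl⟩ := (hqK _).1 hk0
  have hs : (LinearMap.lsmul A M f).rTensor (LinearMap.ker g) k' = f • k' := by
    have : LinearMap.lsmul A M f = f • LinearMap.id := by ext; rfl
    rw [this, LinearMap.rTensor_smul, LinearMap.rTensor_id]; rfl
  rw [hs, map_smul] at hk
  rw [← hF hk]
  exact (hexM _).2 ⟨k', rfl⟩

lemma isSMulRegular_tensor {M N : Type*} [AddCommGroup M] [Module A M]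
    [AddCommGroup N] [Module A N] (hM : IsSMulRegular M f)
    [Module.Flat (A ⧸ Ideal.span {f}) (M ⧸ (Ideal.span {f} • ⊤ : Submodule A M))]
    (hN : IsSMulRegular N f) : IsSMulRegular (M ⊗[A] N) f :=
  isSMulRegular_tensor_aux (Finsupp.linearCombination A (id : N → N))
    (Finsupp.linearCombination_id_surjective A N) hM hN

lemma flat_of {M : Type*} [AddCommGroup M] [Module A M] (hf : IsSMulRegular A f)
    (hM : IsSMulRegular M f)
    [Module.Flat (A ⧸ Ideal.span {f}) (M ⧸ (Ideal.span {f} • ⊤ : Submodule A M))]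
    [Module.Flat (Localization (Submonoid.powers f)) (LocalizedModule (Submonoid.powers f) M)] :
    Module.Flat A M := by
  have hfl : Module.Flat A (LocalizedModule (Submonoid.powers f) M) :=
    Module.Flat.trans A (Localization (Submonoid.powers f)) _
  rw [Module.Flat.iff_lTensor_injective']
  intro I
  rw [injective_iff_map_eq_zero]
  intro x hx
  let l := LocalizedModule.mkLinearMap (Submonoid.powers f) M
  have hloc : IsLocalizedModule (Submonoid.powers f) (AlgebraTensorModule.rTensor A I l) :=
    inferInstance
  have h0 : AlgebraTensorModule.rTensor A I l x = 0 := by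
    apply Module.Flat.lTensor_preserves_injective_linearMap
      (M := LocalizedModule (Submonoid.powers f) M) I.subtype I.injective_subtype
    rw [map_zero]
    change (I.subtype.lTensor _) (l.rTensor I x) = 0
    have hc : (I.subtype.lTensor _) (l.rTensor I x) = l.rTensor A (I.subtype.lTensor M x) := by
      rw [← LinearMap.comp_apply, ← LinearMap.comp_apply, LinearMap.lTensor_comp_rTensor,
        LinearMap.rTensor_comp_lTensor]
    rw [hc, hx, map_zero]
  rw [IsLocalizedModule.eq_zero_iff (Submonoid.powers f)] at h0
  obtain ⟨⟨_, n, rfl⟩, hn⟩ := h0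
  have hI : IsSMulRegular I f := hf.submodule I f
  exact ((isSMulRegular_tensor hM hI).pow n).right_eq_zero_of_smul hn

lemma map_eq_top {S M N : Type*} [CommRing S] [Algebra A S] [AddCommGroup M] [Module A M]
    [AddCommGroup N] [Module A N] [Module S N] [IsScalarTower A S N] [Module.FaithfullyFlat S N]
    (l : M →ₗ[A] N) (hl : Submodule.span S (Set.range l) = ⊤) (I : Ideal A)
    (hI : I • (⊤ : Submodule A M) = ⊤) : I.map (algebraMap A S) = ⊤ := by
  apply ((Module.FaithfullyFlat.iff_flat_and_ideal_smul_eq_top S N).1 inferInstance).2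
  refine eq_top_iff.2 (hl.symm.le.trans (Submodule.span_le.2 ?_))
  rintro _ ⟨y, rfl⟩
  have hy : y ∈ I • (⊤ : Submodule A M) := by rw [hI]; trivial
  induction hy using Submodule.smul_induction_on' with
  | smul r hr n hn =>
    rw [map_smul, ← algebraMap_smul S r (l n)]
    exact Submodule.smul_mem_smul (Ideal.mem_map_of_mem _ hr) trivial
  | add x hx y hy h1 h2 => rw [map_add]; exact Submodule.add_mem _ h1 h2

end FFStrat


/-- Faithful flatness over a commutative ring `A` can be tested on the constructible
stratification given by a nonzerodivisor `f`: `M` is faithfully flat over `A` iff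
multiplication by `f` is injective on `M`, `M/fM` is faithfully flat over `A/(f)`,
and `M_f` is faithfully flat over `A_f`. -/
theorem faithfullyFlat_iff_of_nonZeroDivisor {A : Type*} [CommRing A] (f : A)
    (hf : f ∈ nonZeroDivisors A) (M : Type*) [AddCommGroup M] [Module A M] :
    Module.FaithfullyFlat A M ↔
      (Function.Injective (fun m : M => f • m) ∧
        Module.FaithfullyFlat (A ⧸ Ideal.span {f})
          (M ⧸ (Ideal.span {f} • ⊤ : Submodule A M)) ∧
        Module.FaithfullyFlat (Localization (Submonoid.powers f))
          (LocalizedModule (Submonoid.powers f) M)) := by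
  constructor
  · intro h
    refine ⟨Module.Flat.isSMulRegular_of_nonZeroDivisors hf, ?_, ?_⟩
    · exact Module.FaithfullyFlat.of_linearEquiv _ _
        ((LinearEquiv.extendScalarsOfSurjective (S := A ⧸ Ideal.span {f})
          Ideal.Quotient.mk_surjective
          (TensorProduct.quotTensorEquivQuotSMul M (Ideal.span {f}))).symm)
    · exact Module.FaithfullyFlat.of_linearEquiv _ _
        (LocalizedModule.isBaseChange (Submonoid.powers f) M).equiv.symm
  · rintro ⟨hM, h1, h2⟩
    have hfA : IsSMulRegular A f := Module.Flat.isSMulRegular_of_nonZeroDivisors hf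
    refine { toFlat := FFStrat.flat_of hfA hM, submodule_ne_top := ?_ }
    intro m hm htop
    by_cases hfm : f ∈ m
    · have := FFStrat.map_eq_top (S := A ⧸ Ideal.span {f})
        (Ideal.span {f} • ⊤ : Submodule A M).mkQ (by
          rw [Set.range_eq_univ.2 (Submodule.mkQ_surjective _), Submodule.span_univ]) m htop
      apply hm.ne_top
      have h3 := Ideal.comap_map_of_surjective (algebraMap A (A ⧸ Ideal.span {f}))
        Ideal.Quotient.mk_surjective m
      rw [this, Ideal.comap_top, ← RingHom.ker_eq_comap_bot, Ideal.Quotient.algebraMap_eq,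
        Ideal.mk_ker, sup_eq_left.2 ((Ideal.span_singleton_le_iff_mem m).2 hfm)] at h3
      exact h3.symm
    · have := FFStrat.map_eq_top (S := Localization (Submonoid.powers f))
        (LocalizedModule.mkLinearMap (Submonoid.powers f) M)
        (by
            rw [← Set.image_univ]
            exact span_eq_top_of_isLocalizedModule (Localization (Submonoid.powers f))
              (Submonoid.powers f) (LocalizedModule.mkLinearMap (Submonoid.powers f) M)
              (Submodule.span_univ (R := A) (M := M))) m htop
      refine (IsLocalization.map_algebraMap_ne_top_iff_disjoint (Submonoid.powers f) _ m).2 ?_ this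
      rw [Set.disjoint_left]
      rintro _ ⟨n, rfl⟩ h
      exact hfm (hm.isPrime.mem_of_pow_mem n h)
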